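/- arXiv:2502.03768 — 6 statements merged into one kernel-verified Lean document; each statement's English description precedes it below -/
import Mathlib

section
/- For every n ≥ 2, the matrix R^(n)(x,y) satisfies the Yang–Baxter equation R^(n)_{12}(x,y) R^(n)_{13}(x,z) R^(n)_{23}(y,z) = R^(n)_{23}(y,z) R^(n)_{13}(x,z) R^(n)_{12}(x,y) in End(V ⊗ V ⊗ V), where R^(n)_{ab} denotes R^(n) acting on the a-th and b-th tensor factors of V ⊗ V ⊗ V and as the identity on the remaining factor. -/
noncomputable section
open scoped BigOperators

variable {F : Type*}

/-- `x ⊖ y := (x - y)/(1 + β·y)`. -/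
def om [Field F] (β x y : F) : F := (x - y) / (1 + β * y)

/-- `⊖ t := -t/(1 + β·t)`. -/
def negOm [Field F] (β t : F) : F := (-t) / (1 + β * t)

/-- The R-matrix `R^{(n)}(x,y)` on `V ⊗ V`, `V = F^n`, with entries
`R_{ij,kl} = (1 + [k<l]·β(x⊖y)) δ_{il} δ_{jk} + [k>l]·(x⊖y) δ_{ik} δ_{jl}`;
the row index is the pair `(i,j)`, the column index is the pair `(k,l)`. -/
def Rmat [Field F] (n : ℕ) (β x y : F) :
    Matrix (Fin n × Fin n) (Fin n × Fin n) F := Matrix.of fun p q =>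
  (if p.1 = q.2 ∧ p.2 = q.1 then (if q.1 < q.2 then 1 + β * om β x y else 1) else 0) +
  (if p.1 = q.1 ∧ p.2 = q.2 ∧ q.2 < q.1 then om β x y else 0)

/-- `R^{(n)}` acting on factors 1,2 of `V ⊗ V ⊗ V`. -/
def emb12 [Field F] (n : ℕ) (M : Matrix (Fin n × Fin n) (Fin n × Fin n) F) :
    Matrix (Fin n × Fin n × Fin n) (Fin n × Fin n × Fin n) F := Matrix.of fun p q =>
  M (p.1, p.2.1) (q.1, q.2.1) * (if p.2.2 = q.2.2 then 1 else 0)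

/-- `R^{(n)}` acting on factors 1,3 of `V ⊗ V ⊗ V`. -/
def emb13 [Field F] (n : ℕ) (M : Matrix (Fin n × Fin n) (Fin n × Fin n) F) :
    Matrix (Fin n × Fin n × Fin n) (Fin n × Fin n × Fin n) F := Matrix.of fun p q =>
  M (p.1, p.2.2) (q.1, q.2.2) * (if p.2.1 = q.2.1 then 1 else 0)

/-- `R^{(n)}` acting on factors 2,3 of `V ⊗ V ⊗ V`. -/
def emb23 [Field F] (n : ℕ) (M : Matrix (Fin n × Fin n) (Fin n × Fin n) F) :
    Matrix (Fin n × Fin n × Fin n) (Fin n × Fin n × Fin n) F := Matrix.of fun p q =>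
  M (p.2.1, p.2.2) (q.2.1, q.2.2) * (if p.1 = q.1 then 1 else 0)

/-- Scalar weight of the exchange term. -/
def ybW [Field F] {n : ℕ} (β u : F) (k l : Fin n) : F := if k < l then 1 + β * u else 1

/-- Scalar weight of the diagonal term. -/
def ybD [Field F] {n : ℕ} (u : F) (k l : Fin n) : F := if l < k then u else 0

theorem Rmat_eq_single [Field F] (n : ℕ) (β x y : F) (i j k l : Fin n) :
    Rmat n β x y (i, j) (k, l) =
      (if (i, j) = (l, k) then ybW β (om β x y) k l else 0) +
      (if (i, j) = (k, l) then ybD (om β x y) k l else 0) := by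
  simp only [Rmat, Matrix.of_apply, ybW, ybD, Prod.mk.injEq, ← and_assoc, ite_and]

theorem mul_emb12 [Field F] (n : ℕ) (β x y : F)
    (A : Matrix (Fin n × Fin n × Fin n) (Fin n × Fin n × Fin n) F)
    (p : Fin n × Fin n × Fin n) (a b c : Fin n) :
    (A * emb12 n (Rmat n β x y)) p (a, b, c) =
      ybW β (om β x y) a b * A p (b, a, c) + ybD (om β x y) a b * A p (a, b, c) := by
  rw [Matrix.mul_apply]
  have h : ∀ q : Fin n × Fin n × Fin n, A p q * emb12 n (Rmat n β x y) q (a, b, c) =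
      (if q = (b, a, c) then ybW β (om β x y) a b * A p q else 0) +
      (if q = (a, b, c) then ybD (om β x y) a b * A p q else 0) := by
    rintro ⟨i, j, k⟩
    simp only [emb12, Matrix.of_apply, Rmat_eq_single, Prod.mk.injEq]
    split_ifs <;> first | ring1 | (exfalso; tauto)
  simp only [h, Finset.sum_add_distrib, Finset.sum_ite_eq', Finset.mem_univ, if_true]

theorem mul_emb13 [Field F] (n : ℕ) (β x y : F)
    (A : Matrix (Fin n × Fin n × Fin n) (Fin n × Fin n × Fin n) F)
    (p : Fin n × Fin n × Fin n) (a b c : Fin n) :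
    (A * emb13 n (Rmat n β x y)) p (a, b, c) =
      ybW β (om β x y) a c * A p (c, b, a) + ybD (om β x y) a c * A p (a, b, c) := by
  rw [Matrix.mul_apply]
  have h : ∀ q : Fin n × Fin n × Fin n, A p q * emb13 n (Rmat n β x y) q (a, b, c) =
      (if q = (c, b, a) then ybW β (om β x y) a c * A p q else 0) +
      (if q = (a, b, c) then ybD (om β x y) a c * A p q else 0) := by
    rintro ⟨i, j, k⟩
    simp only [emb13, Matrix.of_apply, Rmat_eq_single, Prod.mk.injEq]
    split_ifs <;> first | ring1 | (exfalso; tauto)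
  simp only [h, Finset.sum_add_distrib, Finset.sum_ite_eq', Finset.mem_univ, if_true]

theorem mul_emb23 [Field F] (n : ℕ) (β x y : F)
    (A : Matrix (Fin n × Fin n × Fin n) (Fin n × Fin n × Fin n) F)
    (p : Fin n × Fin n × Fin n) (a b c : Fin n) :
    (A * emb23 n (Rmat n β x y)) p (a, b, c) =
      ybW β (om β x y) b c * A p (a, c, b) + ybD (om β x y) b c * A p (a, b, c) := by
  rw [Matrix.mul_apply]
  have h : ∀ q : Fin n × Fin n × Fin n, A p q * emb23 n (Rmat n β x y) q (a, b, c) =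
      (if q = (a, c, b) then ybW β (om β x y) b c * A p q else 0) +
      (if q = (a, b, c) then ybD (om β x y) b c * A p q else 0) := by
    rintro ⟨i, j, k⟩
    simp only [emb23, Matrix.of_apply, Rmat_eq_single, Prod.mk.injEq]
    split_ifs <;> first | ring1 | (exfalso; tauto)
  simp only [h, Finset.sum_add_distrib, Finset.sum_ite_eq', Finset.mem_univ, if_true]

theorem om_add [Field F] (β x y z : F) (hy : 1 + β * y ≠ 0) (hz : 1 + β * z ≠ 0) :
    om β x z = om β x y + om β y z + β * om β x y * om β y z := by
  simp only [om]
  have h1 : (x - y) / (1 + β * y) * (1 + β * y) = x - y := div_mul_cancel₀ _ hy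
  have h2 : (y - z) / (1 + β * z) * (1 + β * z) = y - z := div_mul_cancel₀ _ hz
  generalize (x - y) / (1 + β * y) = u at h1 ⊢
  generalize (y - z) / (1 + β * z) = v at h2 ⊢
  rw [div_eq_iff hz]
  linear_combination -h1 - (1 + β * u) * h2

theorem one_add_ne_zero_of_transc [Field F] [CharZero F] (β x y z : F)
    (hind : AlgebraicIndependent ℚ ![β, x, y, z]) (i : Fin 4) :
    1 + β * ![β, x, y, z] i ≠ 0 := by
  intro h
  have h1 : MvPolynomial.aeval ![β, x, y, z]
      (1 + MvPolynomial.X 0 * MvPolynomial.X i : MvPolynomial (Fin 4) ℚ) = 0 := by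
    simpa using h
  have h2 := (AlgebraicIndependent.eq_zero_of_aeval_eq_zero hind) _ h1
  have h3 := congrArg (MvPolynomial.eval (fun _ => (1 : ℚ))) h2
  norm_num at h3

/-- **Yang–Baxter equation** for the `GL(n)` asymmetric five-vertex R-matrix:
`R^{(n)}_{12}(x,y) R^{(n)}_{13}(x,z) R^{(n)}_{23}(y,z)
  = R^{(n)}_{23}(y,z) R^{(n)}_{13}(x,z) R^{(n)}_{12}(x,y)`. -/
theorem yang_baxter_equation [Field F] [CharZero F] (n : ℕ) (hn : 2 ≤ n) (β x y z : F)
    (hind : AlgebraicIndependent ℚ ![β, x, y, z]) :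
    emb12 n (Rmat n β x y) * emb13 n (Rmat n β x z) * emb23 n (Rmat n β y z) =
      emb23 n (Rmat n β y z) * emb13 n (Rmat n β x z) * emb12 n (Rmat n β x y) := by
  have hy : 1 + β * y ≠ 0 := one_add_ne_zero_of_transc β x y z hind 2
  have hz : 1 + β * z ≠ 0 := one_add_ne_zero_of_transc β x y z hind 3
  ext p ⟨a, b, c⟩
  rw [← Matrix.one_mul (emb12 n (Rmat n β x y) * _ * _),
    ← Matrix.one_mul (emb23 n (Rmat n β y z) * _ * _)]
  simp only [← Matrix.mul_assoc]
  simp only [mul_emb12, mul_emb13, mul_emb23]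
  rw [om_add β x y z hy hz]
  generalize om β x y = u
  generalize om β y z = v
  generalize (1 : Matrix (Fin n × Fin n × Fin n) (Fin n × Fin n × Fin n) F) p = f
  simp only [ybW, ybD]
  rcases lt_trichotomy a b with hab | hab | hab <;>
  rcases lt_trichotomy b c with hbc | hbc | hbc <;>
  rcases lt_trichotomy a c with hac | hac | hac <;>
  first
  | (exfalso; order)
  | (subst_vars; simp only [*, lt_irrefl, not_lt_of_gt, if_true, if_false] <;> ring1)
end
end

section
/- For every m ≥ 2 and all indices 0 ≤ i,j,s,t ≤ m−1, the entries of R^(m) satisfy the two contraction identities: ∑_{k,l=0}^{m−1} R^(m)_{ij,lk}(x,y) R^(m)_{kl,st}(y,z) = R^(m)_{ij,st}(x,z), and ∑_{k,l=0}^{m−1} R^(m)_{ij,lk}(y,z) R^(m)_{kl,st}(x,y) = R^(m)_{ij,st}(x,z). -/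
noncomputable section
open scoped BigOperators

variable {F : Type*}

/-- The contracted sum collapses to two terms. -/
theorem Rmat_sum_collapse [Field F] (m : ℕ) (β x y : F) (i j : Fin m) (f : Fin m → Fin m → F) :
    ∑ k : Fin m, ∑ l : Fin m, Rmat m β x y (i, j) (l, k) * f k l =
      (if j < i then 1 + β * om β x y else 1) * f i j +
      (if j < i then om β x y else 0) * f j i := by
  have h : ∀ k l : Fin m, Rmat m β x y (i, j) (l, k) * f k l =
      (if i = k then (if j = l then (if j < i then 1 + β * om β x y else 1) * f i j else 0) else 0) +
      (if j = k then (if i = l then (if j < i then om β x y else 0) * f j i else 0) else 0) := by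
    intro k l
    simp only [Rmat, Matrix.of_apply, add_mul]
    congr 1
    · by_cases h1 : i = k <;> by_cases h2 : j = l <;> simp [h1, h2]
    · by_cases h1 : j = k <;> by_cases h2 : i = l <;> simp [h1, h2]
  simp only [h, Finset.sum_add_distrib]
  simp

theorem Rmat_contract_aux [Field F] (m : ℕ) (β x y x' y' u v : F)
    (hc : om β u v = om β x y + om β x' y' + β * om β x y * om β x' y') (i j s t : Fin m) :
    ∑ k : Fin m, ∑ l : Fin m, Rmat m β x y (i, j) (l, k) * Rmat m β x' y' (k, l) (s, t) =
      Rmat m β u v (i, j) (s, t) := by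
  rw [Rmat_sum_collapse m β x y i j (fun k l => Rmat m β x' y' (k, l) (s, t))]
  simp only [Rmat, Matrix.of_apply, hc]
  generalize om β x y = a
  generalize om β x' y' = b
  by_cases hji : j < i
  · have hn : ¬ i < j := not_lt.mpr hji.le
    have hne : i ≠ j := hji.ne'
    by_cases h1 : i = t ∧ j = s
    · obtain ⟨rfl, rfl⟩ := h1
      simp [hji, hn, hne, hne.symm]
      ring
    · by_cases h2 : i = s ∧ j = t
      · obtain ⟨rfl, rfl⟩ := h2
        simp [hji, hn, hne, hne.symm]
        ring
      · have h1' : ¬ (j = s ∧ i = t) := fun h => h1 h.symm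
        have h2' : ¬ (j = t ∧ i = s) := fun h => h2 h.symm
        have h3 : ¬ (i = s ∧ j = t ∧ t < s) := fun h => h2 ⟨h.1, h.2.1⟩
        have h4 : ¬ (j = s ∧ i = t ∧ t < s) := fun h => h1' ⟨h.1, h.2.1⟩
        rw [if_neg h1, if_neg h2', if_neg h3, if_neg h4, if_neg h1, if_neg h3]
        ring
  · have h3 : ¬ (i = s ∧ j = t ∧ t < s) := by
      rintro ⟨rfl, rfl, h⟩
      exact hji h
    simp only [if_neg hji, if_neg h3]
    by_cases h1 : i = t ∧ j = s
    · obtain ⟨rfl, rfl⟩ := h1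
      simp [hji]
    · simp [h1]

theorem one_add_ne_zero_aux [Field F] [CharZero F] (β x y z : F)
    (hind : AlgebraicIndependent ℚ ![β, x, y, z]) (n : Fin 4) :
    1 + β * (![β, x, y, z] n) ≠ 0 := by
  intro h
  have h0 := (algebraicIndependent_iff.mp hind)
    (1 + MvPolynomial.X 0 * MvPolynomial.X n) (by simpa using h)
  have h1 := congrArg (MvPolynomial.eval (fun _ => (0 : ℚ))) h0
  simp at h1

/-- **Contraction identities** for the entries of `R^{(m)}`:
`∑_{k,l} R^{(m)}_{ij,lk}(x,y) R^{(m)}_{kl,st}(y,z) = R^{(m)}_{ij,st}(x,z)` and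
`∑_{k,l} R^{(m)}_{ij,lk}(y,z) R^{(m)}_{kl,st}(x,y) = R^{(m)}_{ij,st}(x,z)`. -/
theorem R_contraction [Field F] [CharZero F] (m : ℕ) (hm : 2 ≤ m) (β x y z : F)
    (hind : AlgebraicIndependent ℚ ![β, x, y, z]) :
    (∀ i j s t : Fin m,
        ∑ k : Fin m, ∑ l : Fin m,
          Rmat m β x y (i, j) (l, k) * Rmat m β y z (k, l) (s, t) =
            Rmat m β x z (i, j) (s, t)) ∧
    (∀ i j s t : Fin m,
        ∑ k : Fin m, ∑ l : Fin m,
          Rmat m β y z (i, j) (l, k) * Rmat m β x y (k, l) (s, t) =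
            Rmat m β x z (i, j) (s, t)) := by
  have hy : 1 + β * y ≠ 0 := by simpa using one_add_ne_zero_aux β x y z hind 2
  have hz : 1 + β * z ≠ 0 := by simpa using one_add_ne_zero_aux β x y z hind 3
  have hc : om β x z = om β x y + om β y z + β * om β x y * om β y z := by
    have h1 : om β x y * (1 + β * y) = x - y := div_mul_cancel₀ _ hy
    have h2 : om β y z * (1 + β * z) = y - z := div_mul_cancel₀ _ hz
    have h3 : om β x z * (1 + β * z) = x - z := div_mul_cancel₀ _ hz
    apply mul_right_cancel₀ hz
    linear_combination h3 - h1 - (1 + β * om β x y) * h2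
  refine ⟨Rmat_contract_aux m β x y y z x z hc, Rmat_contract_aux m β y z x y x z ?_⟩
  rw [hc]
  ring
end
end

section
/- The monodromy matrices satisfy the RTT relation: R^(n)_{ab}(x,y) T_a(x) T_b(y) = T_b(y) T_a(x) R^(n)_{ab}(x,y) as endomorphisms of V_a ⊗ V_b ⊗ H, where T_a(x) (resp. T_b(y)) acts on V_a ⊗ H (resp. V_b ⊗ H) and as the identity on the other auxiliary space, and R^(n)_{ab}(x,y) acts on V_a ⊗ V_b. -/
noncomputable section
open scoped BigOperators

variable {F : Type*}

/-- `R_{a i}(u, τ)` : the R-matrix acting on the auxiliary space (first factor)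
and the `i`-th site of `H = (F^n)^{⊗N}`, identity elsewhere. -/
def Rsite [Field F] (n N : ℕ) (β u τ : F) (i : Fin N) :
    Matrix (Fin n × (Fin N → Fin n)) (Fin n × (Fin N → Fin n)) F := Matrix.of fun p q =>
  Rmat n β u τ (p.1, p.2 i) (q.1, q.2 i) *
    (if ∀ j, j ≠ i → p.2 j = q.2 j then 1 else 0)

/-- The monodromy matrix `T_a(u) = R_{aN}(u,t_N) ⋯ R_{a1}(u,t_1)` on `V_a ⊗ H`. -/
def Tmono [Field F] (n N : ℕ) (β u : F) (t : Fin N → F) :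
    Matrix (Fin n × (Fin N → Fin n)) (Fin n × (Fin N → Fin n)) F :=
  ((List.ofFn fun i : Fin N => Rsite n N β u (t i) i).reverse).prod

/-- The block `T_a(u)_{r c}` (with respect to the auxiliary space) as an operator on `H`. -/
def blockOp [Field F] (n N : ℕ) (β u : F) (t : Fin N → F) (r c : Fin n) :
    Matrix (Fin N → Fin n) (Fin N → Fin n) F :=
  Matrix.of fun s s' => Tmono n N β u t (r, s) (c, s')

/-- The natural basis vector `|n_1,…,n_N⟩` of `H` (also used as a dual basis covector). -/
def ket [Field F] (n N : ℕ) (g : Fin N → Fin n) : (Fin N → Fin n) → F :=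
  fun s => if s = g then 1 else 0

/-- `T_a` : the monodromy matrix acting on `V_a ⊗ H`, identity on `V_b`,
as an endomorphism of `V_a ⊗ V_b ⊗ H`. -/
def TaEmb [Field F] (n N : ℕ)
    (M : Matrix (Fin n × (Fin N → Fin n)) (Fin n × (Fin N → Fin n)) F) :
    Matrix (Fin n × Fin n × (Fin N → Fin n)) (Fin n × Fin n × (Fin N → Fin n)) F :=
  Matrix.of fun p q => M (p.1, p.2.2) (q.1, q.2.2) * (if p.2.1 = q.2.1 then 1 else 0)

/-- `T_b` : the monodromy matrix acting on `V_b ⊗ H`, identity on `V_a`. -/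
def TbEmb [Field F] (n N : ℕ)
    (M : Matrix (Fin n × (Fin N → Fin n)) (Fin n × (Fin N → Fin n)) F) :
    Matrix (Fin n × Fin n × (Fin N → Fin n)) (Fin n × Fin n × (Fin N → Fin n)) F :=
  Matrix.of fun p q => M (p.2.1, p.2.2) (q.2.1, q.2.2) * (if p.1 = q.1 then 1 else 0)

/-- `R^{(n)}_{ab}` acting on `V_a ⊗ V_b`, identity on `H`. -/
def RabEmb [Field F] (n N : ℕ) (M : Matrix (Fin n × Fin n) (Fin n × Fin n) F) :
    Matrix (Fin n × Fin n × (Fin N → Fin n)) (Fin n × Fin n × (Fin N → Fin n)) F :=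
  Matrix.of fun p q => M (p.1, p.2.1) (q.1, q.2.1) * (if p.2.2 = q.2.2 then 1 else 0)

/-- coefficient of the swapped term -/
def cc [Field F] {n : ℕ} (β u : F) (i j : Fin n) : F := if j < i then 1 + β * u else 1

/-- coefficient of the unswapped term -/
def dd [Field F] {n : ℕ} (u : F) (i j : Fin n) : F := if j < i then u else 0

lemma Rmat_apply [Field F] (n : ℕ) (β x y : F) (i j k l : Fin n) :
    Rmat n β x y (i, j) (k, l) =
      (if i = l ∧ j = k then cc β (om β x y) i j else 0) +
      (if i = k ∧ j = l then dd (om β x y) i j else 0) := by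
  unfold Rmat cc dd
  simp only [Matrix.of_apply]
  congr 1
  · split_ifs with h1 h2 h3 h3 <;> first | rfl | (exfalso; grind)
  · split_ifs with h1 h2 h3 h3 <;> first | rfl | (exfalso; grind)

lemma Rab_mulVec [Field F] (n N : ℕ) (β x y : F)
    (g : Fin n × Fin n × (Fin N → Fin n) → F) (a b : Fin n) (s : Fin N → Fin n) :
    (RabEmb n N (Rmat n β x y)).mulVec g (a, b, s) =
      cc β (om β x y) a b * g (b, a, s) + dd (om β x y) a b * g (a, b, s) := by
  have h : ∀ q, RabEmb n N (Rmat n β x y) (a, b, s) q * g q =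
      (if q = (b, a, s) then cc β (om β x y) a b * g q else 0) +
      (if q = (a, b, s) then dd (om β x y) a b * g q else 0) := by
    rintro ⟨a', b', s'⟩
    simp only [RabEmb, Matrix.of_apply, Rmat_apply, Prod.mk.injEq]
    grind
  simp only [Matrix.mulVec, dotProduct, h, Finset.sum_add_distrib]
  simp

lemma site_iff {n N : ℕ} (i : Fin N) (a a' : Fin n) (s s' : Fin N → Fin n) :
    (a = s' i ∧ ∀ j, j ≠ i → s j = s' j) ↔ s' = Function.update s i a := by
  constructor
  · rintro ⟨h, h'⟩
    funext j
    by_cases hj : j = i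
    · subst hj; simp [h]
    · simp [hj, h' j hj]
  · rintro rfl
    refine ⟨by simp, fun j hj => by simp [hj]⟩

lemma Rsite_apply [Field F] (n N : ℕ) (β u τ : F) (i : Fin N) (a a' : Fin n)
    (s s' : Fin N → Fin n) :
    Rsite n N β u τ i (a, s) (a', s') =
      (if a' = s i ∧ s' = Function.update s i a then cc β (om β u τ) a (s i) else 0) +
      (if a' = a ∧ s' = s then dd (om β u τ) a (s i) else 0) := by
  have h1 := site_iff i a a' s s'
  have h2 := site_iff i (s i) a' s s'
  rw [Function.update_eq_self] at h2
  simp only [← h1, ← h2]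
  simp only [Rsite, Matrix.of_apply, Rmat_apply]
  by_cases h : ∀ j, j ≠ i → s j = s' j
  · have h' := eq_true h
    simp only [h', if_true, mul_one, and_true]
    grind
  · simp only [h, if_false, mul_zero, and_false, add_zero]

lemma Ta_mulVec [Field F] (n N : ℕ) (β u τ : F) (i : Fin N)
    (g : Fin n × Fin n × (Fin N → Fin n) → F) (a b : Fin n) (s : Fin N → Fin n) :
    (TaEmb n N (Rsite n N β u τ i)).mulVec g (a, b, s) =
      cc β (om β u τ) a (s i) * g (s i, b, Function.update s i a) +
        dd (om β u τ) a (s i) * g (a, b, s) := by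
  have h : ∀ q, TaEmb n N (Rsite n N β u τ i) (a, b, s) q * g q =
      (if q = (s i, b, Function.update s i a) then cc β (om β u τ) a (s i) * g q else 0) +
      (if q = (a, b, s) then dd (om β u τ) a (s i) * g q else 0) := by
    rintro ⟨a', b', s'⟩
    simp only [TaEmb, Matrix.of_apply, Rsite_apply, Prod.mk.injEq]
    grind
  simp only [Matrix.mulVec, dotProduct, h, Finset.sum_add_distrib]
  simp

lemma Tb_mulVec [Field F] (n N : ℕ) (β u τ : F) (i : Fin N)
    (g : Fin n × Fin n × (Fin N → Fin n) → F) (a b : Fin n) (s : Fin N → Fin n) :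
    (TbEmb n N (Rsite n N β u τ i)).mulVec g (a, b, s) =
      cc β (om β u τ) b (s i) * g (a, s i, Function.update s i b) +
        dd (om β u τ) b (s i) * g (a, b, s) := by
  have h : ∀ q, TbEmb n N (Rsite n N β u τ i) (a, b, s) q * g q =
      (if q = (a, s i, Function.update s i b) then cc β (om β u τ) b (s i) * g q else 0) +
      (if q = (a, b, s) then dd (om β u τ) b (s i) * g q else 0) := by
    rintro ⟨a', b', s'⟩
    simp only [TbEmb, Matrix.of_apply, Rsite_apply, Prod.mk.injEq]
    grind
  simp only [Matrix.mulVec, dotProduct, h, Finset.sum_add_distrib]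
  simp

lemma ybe_scalar [Field F] {n : ℕ} (β x y z : F) (hy : 1 + β * y ≠ 0) (hz : 1 + β * z ≠ 0)
    (h : Fin n → Fin n → Fin n → F) (a b c : Fin n) :
    cc β (om β x y) a b * (cc β (om β x z) b c *
          (cc β (om β y z) a b * h c b a + dd (om β y z) a b * h c a b) +
        dd (om β x z) b c * (cc β (om β y z) a c * h b c a + dd (om β y z) a c * h b a c)) +
      dd (om β x y) a b * (cc β (om β x z) a c *
          (cc β (om β y z) b a * h c a b + dd (om β y z) b a * h c b a) +
        dd (om β x z) a c * (cc β (om β y z) b c * h a c b + dd (om β y z) b c * h a b c)) =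
    cc β (om β y z) b c * (cc β (om β x z) a b *
          (cc β (om β x y) b c * h c b a + dd (om β x y) b c * h b c a) +
        dd (om β x z) a b * (cc β (om β x y) a c * h c a b + dd (om β x y) a c * h a c b)) +
      dd (om β y z) b c * (cc β (om β x z) a c *
          (cc β (om β x y) c b * h b c a + dd (om β x y) c b * h c b a) +
        dd (om β x z) a c * (cc β (om β x y) a b * h b a c + dd (om β x y) a b * h a b c)) := by
  have key : om β x z = om β x y + om β y z + β * om β x y * om β y z := by
    have e1 : om β x y * (1 + β * y) = x - y := div_mul_cancel₀ _ hy
    have e2 : om β y z * (1 + β * z) = y - z := div_mul_cancel₀ _ hz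
    have e3 : om β x z * (1 + β * z) = x - z := div_mul_cancel₀ _ hz
    apply mul_right_cancel₀ hz
    linear_combination e3 - e1 - (1 + β * om β x y) * e2
  rw [key]
  generalize om β x y = p
  generalize om β y z = q
  unfold cc dd
  rcases lt_trichotomy a b with h1 | h1 | h1 <;>
  rcases lt_trichotomy b c with h2 | h2 | h2 <;>
  rcases lt_trichotomy a c with h3 | h3 | h3 <;>
  first
  | (exfalso; order)
  | (try subst h1
     try subst h2
     try subst h3
     simp only [*, lt_irrefl, not_lt_of_gt, if_true, if_false]
     try ring)

lemma ybe [Field F] (n N : ℕ) (β x y z : F) (hy : 1 + β * y ≠ 0) (hz : 1 + β * z ≠ 0)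
    (i : Fin N) :
    RabEmb n N (Rmat n β x y) * TaEmb n N (Rsite n N β x z i) * TbEmb n N (Rsite n N β y z i) =
      TbEmb n N (Rsite n N β y z i) * TaEmb n N (Rsite n N β x z i) *
        RabEmb n N (Rmat n β x y) := by
  apply Matrix.mulVec_injective
  funext g
  ext ⟨a, b, s⟩
  simp only [← Matrix.mulVec_mulVec, Rab_mulVec, Ta_mulVec, Tb_mulVec, Function.update_self,
    Function.update_idem]
  have := ybe_scalar β x y z hy hz (fun a b c => g (a, b, Function.update s i c)) a b (s i)
  simpa only [Function.update_eq_self] using this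

lemma comm_site [Field F] (n N : ℕ) (β x y z w : F) (i j : Fin N) (hij : i ≠ j) :
    Commute (TaEmb n N (Rsite n N β x z i)) (TbEmb n N (Rsite n N β y w j)) := by
  apply Matrix.mulVec_injective
  funext g
  ext ⟨a, b, s⟩
  simp only [← Matrix.mulVec_mulVec, Ta_mulVec, Tb_mulVec,
    Function.update_of_ne hij, Function.update_of_ne hij.symm, Function.update_comm hij]
  ring

lemma Ta_one [Field F] (n N : ℕ) : TaEmb n N (1 : Matrix _ _ F) = 1 := by
  ext ⟨a, b, s⟩ ⟨a', b', s'⟩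
  simp only [TaEmb, Matrix.of_apply, Matrix.one_apply, Prod.mk.injEq]
  grind

lemma Tb_one [Field F] (n N : ℕ) : TbEmb n N (1 : Matrix _ _ F) = 1 := by
  ext ⟨a, b, s⟩ ⟨a', b', s'⟩
  simp only [TbEmb, Matrix.of_apply, Matrix.one_apply, Prod.mk.injEq]
  grind

lemma Ta_mul [Field F] (n N : ℕ) (A B : Matrix (Fin n × (Fin N → Fin n)) _ F) :
    TaEmb n N (A * B) = TaEmb n N A * TaEmb n N B := by
  ext ⟨a, b, s⟩ ⟨a', b', s'⟩
  simp [TaEmb, Matrix.mul_apply, Fintype.sum_prod_type]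

lemma Tb_mul [Field F] (n N : ℕ) (A B : Matrix (Fin n × (Fin N → Fin n)) _ F) :
    TbEmb n N (A * B) = TbEmb n N A * TbEmb n N B := by
  ext ⟨a, b, s⟩ ⟨a', b', s'⟩
  simp [TbEmb, Matrix.mul_apply, Fintype.sum_prod_type]

lemma train {M ι : Type*} [Monoid M] (R : M) (A B : ι → M)
    (h : ∀ i, R * A i * B i = B i * A i * R) (hc : ∀ i j, i ≠ j → Commute (A i) (B j))
    (l : List ι) (hl : l.Nodup) :
    R * (l.map A).prod * (l.map B).prod = (l.map B).prod * (l.map A).prod * R := by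
  induction l with
  | nil => simp
  | cons i l ih =>
    rw [List.nodup_cons] at hl
    have c1 : (l.map A).prod * B i = B i * (l.map A).prod := by
      apply Commute.list_prod_left
      intro m hm
      obtain ⟨j, hj, rfl⟩ := List.mem_map.1 hm
      exact hc j i (fun e => hl.1 (e ▸ hj))
    have c2 : A i * (l.map B).prod = (l.map B).prod * A i := by
      apply Commute.list_prod_right
      intro m hm
      obtain ⟨j, hj, rfl⟩ := List.mem_map.1 hm
      exact hc i j (fun e => hl.1 (e ▸ hj))
    have ih := ih hl.2
    simp only [List.map_cons, List.prod_cons]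
    generalize (l.map A).prod = P at *
    generalize (l.map B).prod = Q at *
    calc R * (A i * P) * (B i * Q) = R * A i * (P * B i) * Q := by simp only [mul_assoc]
      _ = (R * A i * B i) * P * Q := by rw [c1]; simp only [mul_assoc]
      _ = B i * A i * (R * P * Q) := by rw [h]; simp only [mul_assoc]
      _ = B i * (A i * Q) * P * R := by rw [ih]; simp only [mul_assoc]
      _ = _ := by rw [c2]; simp only [mul_assoc]

lemma Ta_mono [Field F] (n N : ℕ) (β u : F) (t : Fin N → F) :
    TaEmb n N (Tmono n N β u t) =
      ((List.finRange N).reverse.map fun i => TaEmb n N (Rsite n N β u (t i) i)).prod := by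
  unfold Tmono
  rw [List.ofFn_eq_map, ← List.map_reverse]
  induction (List.finRange N).reverse with
  | nil => simp [Ta_one]
  | cons i l ih => simp [Ta_mul, ih]

lemma Tb_mono [Field F] (n N : ℕ) (β u : F) (t : Fin N → F) :
    TbEmb n N (Tmono n N β u t) =
      ((List.finRange N).reverse.map fun i => TbEmb n N (Rsite n N β u (t i) i)).prod := by
  unfold Tmono
  rw [List.ofFn_eq_map, ← List.map_reverse]
  induction (List.finRange N).reverse with
  | nil => simp [Tb_one]
  | cons i l ih => simp [Tb_mul, ih]

lemma nonvanish [Field F] [CharZero F] {ι : Type*} (v : ι → F)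
    (hv : AlgebraicIndependent ℚ v) (i j : ι) : 1 + v i * v j ≠ 0 := by
  intro h
  have h2 : MvPolynomial.aeval v
      (1 + MvPolynomial.X i * MvPolynomial.X j : MvPolynomial ι ℚ) = 0 := by
    simpa using h
  have h3 := (injective_iff_map_eq_zero _).1 hv _ h2
  have h4 := congrArg (MvPolynomial.eval (fun _ => (0 : ℚ))) h3
  simp at h4

/-- **RTT relation**:
`R^{(n)}_{ab}(x,y) T_a(x) T_b(y) = T_b(y) T_a(x) R^{(n)}_{ab}(x,y)`
as endomorphisms of `V_a ⊗ V_b ⊗ H`. -/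
theorem RTT_relation [Field F] [CharZero F] (n N : ℕ) (hn : 2 ≤ n) (β x y : F)
    (t : Fin N → F)
    (hind : AlgebraicIndependent ℚ (Sum.elim ![β, x, y] t)) :
    RabEmb n N (Rmat n β x y) * TaEmb n N (Tmono n N β x t) * TbEmb n N (Tmono n N β y t) =
      TbEmb n N (Tmono n N β y t) * TaEmb n N (Tmono n N β x t) *
        RabEmb n N (Rmat n β x y) := by
  have hy : 1 + β * y ≠ 0 := nonvanish _ hind (Sum.inl 0) (Sum.inl 2)
  have ht : ∀ i, 1 + β * t i ≠ 0 := fun i => nonvanish _ hind (Sum.inl 0) (Sum.inr i)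
  rw [Ta_mono, Tb_mono]
  exact train _ _ _ (fun i => ybe n N β x y (t i) hy (ht i) i)
    (fun i j hij => comm_site n N β x y (t i) (t j) i j hij) _
    (List.nodup_reverse.2 (List.nodup_finRange N))
end
end

section
/- The RTT relation implies the following commutation relations among the block entries of the monodromy matrix, valid for all 1 ≤ i,j,k ≤ n−1: (i) A(x) B_i(y) = (1/(y ⊖ x)) [B_i(y) A(x) − B_i(x) A(y)]; (ii) D_{ij}(x) B_k(y) = ∑_{s,l=1}^{n−1} (1/(x ⊖ y)) B_s(y) D_{il}(x) R^(n−1)_{ls,jk}(x,y) + (1/(y ⊖ x)) B_j(x) D_{ik}(y); (iii) B_i(x) B_j(y) = ∑_{r,s=1}^{n−1} B_r(y) B_s(x) R^(n−1)_{sr,ij}(x,y), where in R^(n−1) the indices 1,…,n−1 are relabelled 0,…,n−2. -/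
noncomputable section
open scoped BigOperators

variable {F : Type*}

namespace BCR

lemma om_cocycle [Field F] (β x y z : F) (hy : 1 + β * y ≠ 0) (hz : 1 + β * z ≠ 0) :
    om β x z = om β x y + om β y z + β * om β x y * om β y z := by
  have h1 : om β x y * (1 + β * y) = x - y := div_mul_cancel₀ _ hy
  have h2 : om β y z * (1 + β * z) = y - z := div_mul_cancel₀ _ hz
  have h3 : om β x z * (1 + β * z) = x - z := div_mul_cancel₀ _ hz
  apply mul_right_cancel₀ hz
  linear_combination h3 - h2 - h1 - β * om β x y * h2

/-- coefficient of the swap -/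
def sc [Field F] {n : ℕ} (β u : F) (i j : Fin n) : F := if j < i then 1 + β * u else 1
/-- coefficient of the diagonal -/
def dc [Field F] {n : ℕ} (u : F) (i j : Fin n) : F := if j < i then u else 0

lemma Rmat_apply [Field F] (n : ℕ) (β x y : F) (i j k l : Fin n) :
    Rmat n β x y (i, j) (k, l) = sc β (om β x y) i j * (if l = i ∧ k = j then 1 else 0)
      + dc (om β x y) i j * (if k = i ∧ l = j then 1 else 0) := by
  simp only [Rmat, Matrix.of_apply, sc, dc]
  congr 1
  · by_cases h : i = l ∧ j = k
    · obtain ⟨rfl, rfl⟩ := h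
      simp
    · have h' : ¬ (l = i ∧ k = j) := fun e => h ⟨e.1.symm, e.2.symm⟩
      rw [if_neg h, if_neg h']; simp
  · by_cases h : i = k ∧ j = l
    · obtain ⟨rfl, rfl⟩ := h
      simp
    · have h' : ¬ (k = i ∧ l = j) := fun e => h ⟨e.1.symm, e.2.symm⟩
      rw [if_neg h', if_neg (fun e => h ⟨e.1, e.2.1⟩)]; simp

/-- row expansion -/
lemma Rmat_row [Field F] {M : Type*} [AddCommGroup M] [Module F M] (n : ℕ) (β x y : F)
    (i j : Fin n) (f : Fin n × Fin n → M) :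
    ∑ q, Rmat n β x y (i, j) q • f q =
      sc β (om β x y) i j • f (j, i) + dc (om β x y) i j • f (i, j) := by
  have : ∀ q : Fin n × Fin n, Rmat n β x y (i, j) q • f q =
      (if q = (j, i) then sc β (om β x y) i j • f q else 0) +
      (if q = (i, j) then dc (om β x y) i j • f q else 0) := by
    rintro ⟨k, l⟩
    rw [Rmat_apply, add_smul]
    congr 1
    · by_cases h : l = i ∧ k = j
      · simp [h]
      · rw [if_neg h, if_neg (by rintro ⟨⟩; exact h ⟨rfl, rfl⟩)]; simp
    · by_cases h : k = i ∧ l = j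
      · simp [h]
      · rw [if_neg h, if_neg (by rintro ⟨⟩; exact h ⟨rfl, rfl⟩)]; simp
  simp only [this, Finset.sum_add_distrib]
  simp

/-- column expansion -/
lemma Rmat_col [Field F] {M : Type*} [AddCommGroup M] [Module F M] (n : ℕ) (β x y : F)
    (k l : Fin n) (f : Fin n × Fin n → M) :
    ∑ p, Rmat n β x y p (k, l) • f p =
      sc β (om β x y) l k • f (l, k) + dc (om β x y) k l • f (k, l) := by
  have : ∀ q : Fin n × Fin n, Rmat n β x y q (k, l) • f q =
      (if q = (l, k) then sc β (om β x y) l k • f q else 0) +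
      (if q = (k, l) then dc (om β x y) k l • f q else 0) := by
    rintro ⟨i, j⟩
    rw [Rmat_apply, add_smul]
    congr 1
    · by_cases h : l = i ∧ k = j
      · simp [h]
      · rw [if_neg h, if_neg (by rintro ⟨⟩; exact h ⟨rfl, rfl⟩)]; simp
    · by_cases h : k = i ∧ l = j
      · simp [h]
      · rw [if_neg h, if_neg (by rintro ⟨⟩; exact h ⟨rfl, rfl⟩)]; simp
  simp only [this, Finset.sum_add_distrib]
  simp

/-- Kronecker delta -/
def kd [Field F] {n : ℕ} (i j : Fin n) : F := if i = j then 1 else 0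

lemma Rmat_kd [Field F] (n : ℕ) (β x y : F) (i j k l : Fin n) :
    Rmat n β x y (i, j) (k, l) = sc β (om β x y) i j * (kd i l * kd j k)
      + dc (om β x y) i j * (kd i k * kd j l) := by
  rw [Rmat_apply]
  simp only [kd, ite_and, mul_ite, mul_one, mul_zero, eq_comm (a := k), eq_comm (a := l)]
  split_ifs <;> simp

lemma sum_kd [Field F] {n : ℕ} (i : Fin n) (f : Fin n → F) : ∑ e, kd i e * f e = f i := by
  simp [kd]

lemma row_left [Field F] (n : ℕ) (β x y : F) (i j k : Fin n) (f : Fin n → F) :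
    ∑ e, Rmat n β x y (i, j) (k, e) * f e =
      sc β (om β x y) i j * (kd j k * f i) + dc (om β x y) i j * (kd i k * f j) := by
  rw [← sum_kd i f, ← sum_kd j f, Finset.mul_sum, Finset.mul_sum, Finset.mul_sum,
    Finset.mul_sum, ← Finset.sum_add_distrib]
  refine Finset.sum_congr rfl fun e _ => ?_
  rw [Rmat_kd]; ring

lemma row_right [Field F] (n : ℕ) (β x y : F) (i j l : Fin n) (f : Fin n → F) :
    ∑ e, Rmat n β x y (i, j) (e, l) * f e =
      sc β (om β x y) i j * (kd i l * f j) + dc (om β x y) i j * (kd j l * f i) := by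
  rw [← sum_kd i f, ← sum_kd j f, Finset.mul_sum, Finset.mul_sum, Finset.mul_sum,
    Finset.mul_sum, ← Finset.sum_add_distrib]
  refine Finset.sum_congr rfl fun e _ => ?_
  rw [Rmat_kd]; ring

/-- operator form of the Yang-Baxter equation -/
lemma ybe_op [Field F] {n : ℕ} (β u w v : F) (hv : v = u + w + β * u * w)
    (g : Fin n → Fin n → Fin n → F) (a b f : Fin n) :
    (sc β u a b * (sc β v b f * (sc β w a b * g f b a + dc w a b * g f a b)
        + dc v b f * (sc β w a f * g b f a + dc w a f * g b a f))
      + dc u a b * (sc β v a f * (sc β w b a * g f a b + dc w b a * g f b a)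
        + dc v a f * (sc β w b f * g a f b + dc w b f * g a b f)))
    = (sc β w b f * (sc β v a b * (sc β u b f * g f b a + dc u b f * g b f a)
        + dc v a b * (sc β u a f * g f a b + dc u a f * g a f b))
      + dc w b f * (sc β v a f * (sc β u f b * g b f a + dc u f b * g f b a)
        + dc v a f * (sc β u a b * g b a f + dc u a b * g a b f))) := by
  subst hv
  simp only [sc, dc]
  rcases lt_trichotomy a b with h1 | h1 | h1 <;> rcases lt_trichotomy b f with h2 | h2 | h2 <;>
    rcases lt_trichotomy a f with h3 | h3 | h3 <;>
    first
    | (exfalso; omega)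
    | (subst_vars; simp [*, not_lt_of_gt]; try ring)

/-- entry form of the Yang-Baxter equation -/
lemma ybe [Field F] {n : ℕ} (β x y z : F) (hy : 1 + β * y ≠ 0) (hz : 1 + β * z ≠ 0)
    (a b f c d f' : Fin n) :
    ∑ p : Fin n × Fin n, Rmat n β x y (a, b) p *
      ∑ e, Rmat n β x z (p.1, f) (c, e) * Rmat n β y z (p.2, e) (d, f') =
    ∑ p : Fin n × Fin n,
      (∑ e, Rmat n β y z (b, f) (p.2, e) * Rmat n β x z (a, e) (p.1, f')) *
        Rmat n β x y p (c, d) := by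
  have key := ybe_op β (om β x y) (om β y z) (om β x z) (om_cocycle β x y z hy hz)
    (fun a b f => kd a c * (kd b d * kd f f')) a b f
  have hL := Rmat_row (M := F) n β x y a b
    (fun p => ∑ e, Rmat n β x z (p.1, f) (c, e) * Rmat n β y z (p.2, e) (d, f'))
  have hR : ∑ p : Fin n × Fin n,
      (∑ e, Rmat n β y z (b, f) (p.2, e) * Rmat n β x z (a, e) (p.1, f')) *
        Rmat n β x y p (c, d) =
      ∑ q : Fin n × Fin n, Rmat n β y z (b, f) q •
        ∑ p, Rmat n β x z (a, q.2) (p, f') * Rmat n β x y (p, q.1) (c, d) := by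
    simp only [Fintype.sum_prod_type, Finset.sum_mul, Finset.mul_sum, smul_eq_mul]
    rw [Finset.sum_comm]
    refine Finset.sum_congr rfl fun q _ => ?_
    rw [Finset.sum_comm]
    refine Finset.sum_congr rfl fun q _ => Finset.sum_congr rfl fun q _ => ?_
    ring
  rw [hR, Rmat_row]
  simp only [smul_eq_mul] at hL ⊢
  rw [hL]
  simp only [row_left, row_right]
  simp only [Rmat_kd]
  linear_combination key

lemma ybe_list {M ι : Type*} [Monoid M] (r : M) (a b : ι → M)
    (h : ∀ i, r * a i * b i = b i * a i * r) (hc : ∀ i j, i ≠ j → Commute (a i) (b j))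
    (l : List ι) (hl : l.Nodup) :
    r * (l.map a).prod * (l.map b).prod = (l.map b).prod * (l.map a).prod * r := by
  induction l with
  | nil => simp
  | cons i l ih =>
    obtain ⟨hi, hl⟩ := List.nodup_cons.1 hl
    have h1 : Commute (b i) (l.map a).prod := by
      apply Commute.list_prod_right
      intro m hm
      obtain ⟨j, hj, rfl⟩ := List.mem_map.1 hm
      exact (hc j i (by rintro rfl; exact hi hj)).symm
    have h2 : Commute (a i) (l.map b).prod := by
      apply Commute.list_prod_right
      intro m hm
      obtain ⟨j, hj, rfl⟩ := List.mem_map.1 hm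
      exact (hc i j (by rintro rfl; exact hi hj))
    have ih := ih hl
    simp only [List.map_cons, List.prod_cons]
    generalize (l.map a).prod = p at *
    generalize (l.map b).prod = q at *
    calc r * (a i * p) * (b i * q) = r * a i * (p * b i) * q := by simp only [mul_assoc]
      _ = (r * a i * b i) * p * q := by rw [← h1.eq]; simp only [mul_assoc]
      _ = b i * a i * (r * p * q) := by rw [h]; simp only [mul_assoc]
      _ = b i * (a i * q) * p * r := by rw [ih]; simp only [mul_assoc]
      _ = _ := by rw [h2.eq]; simp only [mul_assoc]

section
variable {n : Type*} [Fintype n] [DecidableEq n] {A : Type*} [Ring A]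

/-- first-slot embedding -/
def e1 : Matrix n n A →* Matrix (n × n) (n × n) A where
  toFun X := Matrix.of fun p q => if p.2 = q.2 then X p.1 q.1 else 0
  map_one' := by
    ext ⟨a, b⟩ ⟨c, d⟩
    simp only [Matrix.of_apply, Matrix.one_apply, Prod.mk.injEq]
    split_ifs <;> simp_all
  map_mul' X Y := by
    ext ⟨a, b⟩ ⟨c, d⟩
    simp only [Matrix.of_apply, Matrix.mul_apply, Fintype.sum_prod_type]
    simp

/-- second-slot embedding -/
def e2 : Matrix n n A →* Matrix (n × n) (n × n) A where
  toFun X := Matrix.of fun p q => if p.1 = q.1 then X p.2 q.2 else 0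
  map_one' := by
    ext ⟨a, b⟩ ⟨c, d⟩
    simp only [Matrix.of_apply, Matrix.one_apply, Prod.mk.injEq]
    split_ifs <;> simp_all
  map_mul' X Y := by
    ext ⟨a, b⟩ ⟨c, d⟩
    simp only [Matrix.of_apply, Matrix.mul_apply, Fintype.sum_prod_type]
    simp

lemma e12 (X Y : Matrix n n A) (a b c d : n) : (e1 X * e2 Y) (a, b) (c, d) = X a c * Y b d := by
  simp only [e1, e2, Matrix.mul_apply, Fintype.sum_prod_type, MonoidHom.coe_mk, OneHom.coe_mk,
    Matrix.of_apply]
  simp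

lemma e21 (X Y : Matrix n n A) (a b c d : n) : (e2 Y * e1 X) (a, b) (c, d) = Y b d * X a c := by
  simp only [e1, e2, Matrix.mul_apply, Fintype.sum_prod_type, MonoidHom.coe_mk, OneHom.coe_mk,
    Matrix.of_apply]
  simp

end

/-- the operator `M` at site `i` -/
def site [Field F] {n N : ℕ} (i : Fin N) (M : Matrix (Fin n) (Fin n) F) :
    Matrix (Fin N → Fin n) (Fin N → Fin n) F := Matrix.of fun p q =>
  M (p i) (q i) * (if ∀ j, j ≠ i → p j = q j then 1 else 0)

lemma sum_site [Field F] {n N : ℕ} (i : Fin N) (h : Fin N → Fin n) (f : (Fin N → Fin n) → F) :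
    ∑ g, (if ∀ j, j ≠ i → h j = g j then f g else 0) = ∑ e, f (Function.update h i e) := by
  rw [← Finset.sum_filter]
  symm
  refine Finset.sum_bij (fun e _ => Function.update h i e) ?_ ?_ ?_ ?_
  · intro e _
    simp only [Finset.mem_filter, Finset.mem_univ, true_and]
    intro j hj
    simp [hj]
  · intro e _ e' _ he
    simpa using congrFun he i
  · intro g hg
    simp only [Finset.mem_filter, Finset.mem_univ, true_and] at hg
    refine ⟨g i, Finset.mem_univ _, ?_⟩
    ext j
    by_cases hj : j = i
    · subst hj; simp
    · simp [hj, hg j hj]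
  · intros; rfl

lemma site_mul_apply [Field F] {n N : ℕ} (i : Fin N) (M : Matrix (Fin n) (Fin n) F)
    (K : Matrix (Fin N → Fin n) (Fin N → Fin n) F) (h h' : Fin N → Fin n) :
    (site i M * K) h h' = ∑ e, M (h i) e * K (Function.update h i e) h' := by
  rw [Matrix.mul_apply]
  have := sum_site i h (fun g => M (h i) (g i) * K g h')
  simp only [Function.update_self] at this
  rw [← this]
  refine Finset.sum_congr rfl fun g _ => ?_
  simp only [site, Matrix.of_apply]
  split_ifs <;> simp

lemma site_mul [Field F] {n N : ℕ} (i : Fin N) (M M' : Matrix (Fin n) (Fin n) F) :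
    site i M * site i M' = (site i (M * M') : Matrix (Fin N → Fin n) (Fin N → Fin n) F) := by
  ext h h'
  rw [site_mul_apply]
  simp only [site, Matrix.of_apply, Function.update_self, Matrix.mul_apply, Finset.sum_mul]
  refine Finset.sum_congr rfl fun e _ => ?_
  rw [mul_assoc]
  congr 2
  refine if_congr (forall_congr' fun j => imp_congr_right fun hj => ?_) rfl rfl
  simp [hj]

lemma site_mul_ne [Field F] {n N : ℕ} (i j : Fin N) (hij : i ≠ j)
    (M M' : Matrix (Fin n) (Fin n) F) (h h' : Fin N → Fin n) :
    (site i M * site j M') h h' = M (h i) (h' i) * M' (h j) (h' j) *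
      (if ∀ k, k ≠ i → k ≠ j → h k = h' k then 1 else 0) := by
  rw [site_mul_apply, Finset.sum_eq_single (h' i)]
  · simp only [site, Matrix.of_apply, Function.update_of_ne hij.symm, mul_assoc]
    congr 2
    refine if_congr ⟨fun H k hk hk' => ?_, fun H k hk => ?_⟩ rfl rfl
    · simpa [hk] using H k hk'
    · by_cases hki : k = i
      · subst hki; simp
      · simpa [hki] using H k hki hk
  · intro e _ he
    simp only [site, Matrix.of_apply]
    rw [if_neg, mul_zero, mul_zero]
    intro H
    exact he (by simpa using H i hij)
  · simp

lemma site_comm [Field F] {n N : ℕ} (i j : Fin N) (hij : i ≠ j)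
    (M M' : Matrix (Fin n) (Fin n) F) :
    Commute (site i M) (site j M' : Matrix (Fin N → Fin n) (Fin N → Fin n) F) := by
  ext h h'
  rw [site_mul_ne i j hij, site_mul_ne j i hij.symm, mul_comm (M _ _)]
  congr 1
  refine if_congr ⟨fun H k a b => H k b a, fun H k a b => H k b a⟩ rfl rfl

/-- blocks of the L-operator -/
def rb [Field F] (n : ℕ) (β u τ : F) (a c : Fin n) : Matrix (Fin n) (Fin n) F :=
  Matrix.of fun e f => Rmat n β u τ (a, e) (c, f)

/-- L-operator as matrix of operators -/
def Lop [Field F] (n N : ℕ) (β u τ : F) (i : Fin N) :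
    Matrix (Fin n) (Fin n) (Matrix (Fin N → Fin n) (Fin N → Fin n) F) :=
  Matrix.of fun a c => site i (rb n β u τ a c)

/-- R-matrix with operator entries -/
def Rop [Field F] (n N : ℕ) (β x y : F) :
    Matrix (Fin n × Fin n) (Fin n × Fin n) (Matrix (Fin N → Fin n) (Fin N → Fin n) F) :=
  (Rmat n β x y).map (algebraMap F _)

lemma site_sum [Field F] {n N : ℕ} {ι : Type*} (s : Finset ι) (i : Fin N) (c : ι → F)
    (M : ι → Matrix (Fin n) (Fin n) F) :
    (site i (∑ k ∈ s, c k • M k) : Matrix (Fin N → Fin n) (Fin N → Fin n) F)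
      = ∑ k ∈ s, c k • site i (M k) := by
  ext h h'
  simp only [site, Matrix.of_apply, Matrix.sum_apply, Matrix.smul_apply, Finset.sum_mul,
    smul_eq_mul, mul_assoc]

lemma local_rtt [Field F] (n N : ℕ) (β x y z : F) (hy : 1 + β * y ≠ 0) (hz : 1 + β * z ≠ 0)
    (i : Fin N) :
    Rop n N β x y * e1 (Lop n N β x z i) * e2 (Lop n N β y z i) =
      e2 (Lop n N β y z i) * e1 (Lop n N β x z i) * Rop n N β x y := by
  ext1 ⟨a, b⟩ ⟨c, d⟩
  rw [mul_assoc, Matrix.mul_apply, Matrix.mul_apply]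
  have hl : ∀ p : Fin n × Fin n, Rop n N β x y (a, b) p *
      (e1 (Lop n N β x z i) * e2 (Lop n N β y z i)) p (c, d) =
      Rmat n β x y (a, b) p • site i (rb n β x z p.1 c * rb n β y z p.2 d) := by
    rintro ⟨p, q⟩
    rw [e12, ← site_mul, Algebra.smul_def]; rfl
  have hr : ∀ p : Fin n × Fin n, (e2 (Lop n N β y z i) * e1 (Lop n N β x z i)) (a, b) p *
      Rop n N β x y p (c, d) =
      Rmat n β x y p (c, d) • site i (rb n β y z b p.2 * rb n β x z a p.1) := by
    rintro ⟨p, q⟩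
    rw [e21, ← site_mul, Algebra.smul_def, Algebra.commutes]; rfl
  simp only [hl, hr]
  rw [← site_sum, ← site_sum]
  congr 1
  ext f f'
  have := ybe β x y z hy hz a b f c d f'
  simp only [Matrix.sum_apply, Matrix.smul_apply, Matrix.mul_apply, rb, Matrix.of_apply,
    smul_eq_mul]
  rw [this]
  exact Finset.sum_congr rfl fun _ _ => mul_comm _ _

/-- monodromy as matrix of operators -/
def Top [Field F] (n N : ℕ) (β u : F) (t : Fin N → F) :
    Matrix (Fin n) (Fin n) (Matrix (Fin N → Fin n) (Fin N → Fin n) F) :=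
  (((List.finRange N).reverse).map fun i => Lop n N β u (t i) i).prod

lemma blockOp_eq [Field F] (n N : ℕ) (β u : F) (t : Fin N → F) (r c : Fin n) :
    blockOp n N β u t r c = Top n N β u t r c := by
  have h : Tmono n N β u t = Matrix.compRingEquiv _ _ _ (Top n N β u t) := by
    rw [Top, map_list_prod, Tmono, List.ofFn_eq_map, List.map_map, List.map_reverse]
    rfl
  ext s s'
  simp only [blockOp, Matrix.of_apply, h]
  rfl

lemma rtt [Field F] (n N : ℕ) (β x y : F) (t : Fin N → F) (hy : 1 + β * y ≠ 0)
    (ht : ∀ i, 1 + β * t i ≠ 0) (a b c d : Fin n) :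
    ∑ p : Fin n × Fin n, Rmat n β x y (a, b) p •
      (blockOp n N β x t p.1 c * blockOp n N β y t p.2 d) =
    ∑ p : Fin n × Fin n, Rmat n β x y p (c, d) •
      (blockOp n N β y t b p.2 * blockOp n N β x t a p.1) := by
  have key := ybe_list (Rop n N β x y) (fun i => e1 (Lop n N β x (t i) i))
    (fun i => e2 (Lop n N β y (t i) i)) (fun i => local_rtt n N β x y (t i) hy (ht i) i)
    (by
      intro i j hij
      ext1 ⟨a, b⟩ ⟨c, d⟩
      rw [e12, e21]
      exact (site_comm i j hij _ _).eq) (List.finRange N).reverse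
    (List.nodup_reverse.2 (List.nodup_finRange N))
  have m1 : ((List.finRange N).reverse.map fun i => e1 (Lop n N β x (t i) i)).prod =
      e1 (Top n N β x t) := by
    rw [Top, map_list_prod, List.map_map]; rfl
  have m2 : ((List.finRange N).reverse.map fun i => e2 (Lop n N β y (t i) i)).prod =
      e2 (Top n N β y t) := by
    rw [Top, map_list_prod, List.map_map]; rfl
  rw [m1, m2, mul_assoc] at key
  have key := congrFun (congrFun key (a, b)) (c, d)
  rw [Matrix.mul_apply, Matrix.mul_apply] at key
  simp only [blockOp_eq]
  refine Eq.trans (Finset.sum_congr rfl ?_) (key.trans (Finset.sum_congr rfl ?_))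
  · rintro ⟨p, q⟩ _
    rw [e12, Algebra.smul_def]; rfl
  · rintro ⟨p, q⟩ _
    rw [e21, Algebra.smul_def, Algebra.commutes]; rfl

end BCR

/-- **Commutation relations** among the blocks `A(u) = T_a(u)_{00}`,
`B_i(u) = T_a(u)_{0i}`, `D_{ij}(u) = T_a(u)_{ij}` (`1 ≤ i,j ≤ n-1`) of the
monodromy matrix, for `n = m+2`.  The indices `1,…,n-1` of `R^{(n-1)}` are
relabelled `0,…,n-2`. -/
theorem block_commutation_relations [Field F] [CharZero F] (m N : ℕ) (β x y : F)
    (t : Fin N → F)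
    (hind : AlgebraicIndependent ℚ (Sum.elim ![β, x, y] t)) :
    (∀ i : Fin (m + 1),
        blockOp (m + 2) N β x t 0 0 * blockOp (m + 2) N β y t 0 i.succ =
          (om β y x)⁻¹ •
            (blockOp (m + 2) N β y t 0 i.succ * blockOp (m + 2) N β x t 0 0 -
              blockOp (m + 2) N β x t 0 i.succ * blockOp (m + 2) N β y t 0 0)) ∧
    (∀ i j k : Fin (m + 1),
        blockOp (m + 2) N β x t i.succ j.succ * blockOp (m + 2) N β y t 0 k.succ =
          (∑ s : Fin (m + 1), ∑ l : Fin (m + 1),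
              ((om β x y)⁻¹ * Rmat (m + 1) β x y (l, s) (j, k)) •
                (blockOp (m + 2) N β y t 0 s.succ * blockOp (m + 2) N β x t i.succ l.succ)) +
            (om β y x)⁻¹ •
              (blockOp (m + 2) N β x t 0 j.succ * blockOp (m + 2) N β y t i.succ k.succ)) ∧
    (∀ i j : Fin (m + 1),
        blockOp (m + 2) N β x t 0 i.succ * blockOp (m + 2) N β y t 0 j.succ =
          ∑ r : Fin (m + 1), ∑ s : Fin (m + 1),
            Rmat (m + 1) β x y (s, r) (i, j) •
              (blockOp (m + 2) N β y t 0 r.succ * blockOp (m + 2) N β x t 0 s.succ)) := by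
  have hp : ∀ p : MvPolynomial (Fin 3 ⊕ Fin N) ℚ,
      MvPolynomial.aeval (Sum.elim ![β, x, y] t) p = 0 → p = 0 := fun p h =>
    (injective_iff_map_eq_zero _).1 hind p h
  have hne : ∀ k : Fin 3 ⊕ Fin N, 1 + β * (Sum.elim ![β, x, y] t k) ≠ 0 := by
    intro k h
    have h0 := hp (1 + MvPolynomial.X (Sum.inl 0) * MvPolynomial.X k) (by simpa using h)
    have h1 := congrArg (MvPolynomial.eval (fun _ => (0 : ℚ))) h0
    simp at h1
  have hx : 1 + β * x ≠ 0 := by simpa using hne (Sum.inl 1)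
  have hy : 1 + β * y ≠ 0 := by simpa using hne (Sum.inl 2)
  have ht : ∀ i, 1 + β * t i ≠ 0 := fun i => by simpa using hne (Sum.inr i)
  have hxy : x ≠ y := by
    intro h
    have := hind.injective (a₁ := Sum.inl 1) (a₂ := Sum.inl 2) (by simpa using h)
    simp at this
  have hu : om β x y ≠ 0 := div_ne_zero (sub_ne_zero.2 hxy) hy
  have hu' : om β y x ≠ 0 := div_ne_zero (sub_ne_zero.2 hxy.symm) hx
  have hrel : (om β x y)⁻¹ * (1 + β * om β x y) = - (om β y x)⁻¹ := by
    have h1 : x - y ≠ 0 := sub_ne_zero.2 hxy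
    have h2 : y - x ≠ 0 := sub_ne_zero.2 hxy.symm
    have h3 : 1 + β * om β x y = (1 + β * x) / (1 + β * y) := by
      rw [eq_div_iff hy, om, add_mul, mul_assoc, div_mul_cancel₀ _ hy]; ring
    rw [h3, om, om, inv_div, inv_div, div_mul_div_cancel₀' hy, ← div_neg, neg_sub]
  have hsum : ∀ (j k : Fin (m + 1)) (f : Fin (m + 1) → Fin (m + 1) →
      Matrix (Fin N → Fin (m + 2)) (Fin N → Fin (m + 2)) F),
      ∑ s : Fin (m + 1), ∑ l : Fin (m + 1), Rmat (m + 1) β x y (l, s) (j, k) • f s l =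
        BCR.sc β (om β x y) k j • f j k + BCR.dc (om β x y) j k • f k j := by
    intro j k f
    have := BCR.Rmat_col (m + 1) β x y j k (fun p => f p.2 p.1)
    rw [← this, Fintype.sum_prod_type, Finset.sum_comm]
  refine ⟨fun i => ?_, fun i j k => ?_, fun i j => ?_⟩
  · have h := BCR.rtt (m + 2) N β y x t hx ht 0 0 i.succ 0
    rw [BCR.Rmat_row, BCR.Rmat_col] at h
    simp [BCR.sc, BCR.dc] at h
    rw [h, add_sub_cancel_left, smul_smul, inv_mul_cancel₀ hu', one_smul]
  · have h := BCR.rtt (m + 2) N β x y t hy ht i.succ 0 j.succ k.succ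
    rw [BCR.Rmat_row, BCR.Rmat_col] at h
    simp only [mul_smul, ← Finset.smul_sum]
    rw [hsum]
    simp only [BCR.sc, BCR.dc, Fin.succ_lt_succ_iff, Fin.succ_pos, if_true] at h ⊢
    rw [← h, smul_add, smul_smul, smul_smul, inv_mul_cancel₀ hu, one_smul, hrel, neg_smul]
    abel
  · have h := BCR.rtt (m + 2) N β x y t hy ht 0 0 i.succ j.succ
    rw [BCR.Rmat_row, BCR.Rmat_col] at h
    rw [hsum]
    simpa [BCR.sc, BCR.dc] using h
end
end

section
/- For any permutation π of {1,…,N−1}, the vector B_{π(1)}(u_1) B_{π(2)}(u_2) ⋯ B_{π(N−1)}(u_{N−1}) |Ω⟩ lies in the F-span of the basis vectors {|w⟩ : w ∈ S_N}; that is, B_{π(1)}(u_1) ⋯ B_{π(N−1)}(u_{N−1}) |Ω⟩ = ∑_{w ∈ S_N} C^π_w(u_1,…,u_{N−1}) |w⟩ for some scalars C^π_w depending polynomially on u_1,…,u_{N−1}. -/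
noncomputable section
open scoped BigOperators

variable {F : Type*}

/-- The Coxeter length of a permutation: its number of inversions. -/
def permLength {N : ℕ} (w : Equiv.Perm (Fin N)) : ℕ :=
  (Finset.univ.filter fun p : Fin N × Fin N => p.1 < p.2 ∧ w p.2 < w p.1).card

/-- The longest permutation `ω_N : i ↦ N - 1 - i`. -/
def omegaPerm (N : ℕ) : Equiv.Perm (Fin N) :=
  ⟨Fin.rev, Fin.rev, fun i => Fin.rev_rev i, fun i => Fin.rev_rev i⟩

/-- Polynomial dependence of a scalar function on the variables `u`. -/
def PolyFn [Field F] {m : ℕ} (f : (Fin m → F) → F) : Prop :=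
  ∃ p : MvPolynomial (Fin m) F, ∀ u, f u = MvPolynomial.eval u p

lemma PolyFn.const [Field F] {m : ℕ} (a : F) : PolyFn (fun _ : Fin m → F => a) :=
  ⟨MvPolynomial.C a, by simp⟩

lemma PolyFn.var [Field F] {m : ℕ} (a : Fin m) : PolyFn (fun u : Fin m → F => u a) :=
  ⟨MvPolynomial.X a, by simp⟩

lemma PolyFn.add [Field F] {m : ℕ} {f g : (Fin m → F) → F} (hf : PolyFn f) (hg : PolyFn g) :
    PolyFn (fun u => f u + g u) := by
  obtain ⟨p, hp⟩ := hf
  obtain ⟨q, hq⟩ := hg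
  exact ⟨p + q, fun u => by simp [hp, hq]⟩

lemma PolyFn.mul [Field F] {m : ℕ} {f g : (Fin m → F) → F} (hf : PolyFn f) (hg : PolyFn g) :
    PolyFn (fun u => f u * g u) := by
  obtain ⟨p, hp⟩ := hf
  obtain ⟨q, hq⟩ := hg
  exact ⟨p * q, fun u => by simp [hp, hq]⟩

lemma PolyFn.sum [Field F] {m : ℕ} {ι : Type*} (s : Finset ι) {f : ι → (Fin m → F) → F}
    (hf : ∀ i, PolyFn (f i)) : PolyFn (fun u => ∑ i ∈ s, f i u) := by
  choose p hp using hf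
  exact ⟨∑ i ∈ s, p i, fun u => by simp [hp]⟩

lemma PolyFn.om [Field F] {m : ℕ} (β τ : F) (a : Fin m) :
    PolyFn (fun u : Fin m → F => om β (u a) τ) := by
  have h := ((PolyFn.var a).add (PolyFn.const (F := F) (-τ))).mul
    (PolyFn.const (1 + β * τ)⁻¹)
  simpa [_root_.om, div_eq_mul_inv, sub_eq_add_neg] using h

lemma PolyFn.listProd [Field F] {m : ℕ} {I : Type*} [Fintype I] [DecidableEq I]
    (l : List ((Fin m → F) → Matrix I I F))
    (hl : ∀ A ∈ l, ∀ i j, PolyFn (fun u => A u i j)) :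
    ∀ i j, PolyFn (fun u => (l.map (fun A => A u)).prod i j) := by
  induction l with
  | nil =>
    intro i j
    simpa using PolyFn.const ((1 : Matrix I I F) i j)
  | cons A l ih =>
    intro i j
    simp only [List.map_cons, List.prod_cons, Matrix.mul_apply]
    refine PolyFn.sum _ fun k => PolyFn.mul (hl A (by simp) i k) (ih ?_ k j)
    intro B hB
    exact hl B (by simp [hB])

lemma PolyFn.Rsite [Field F] {m : ℕ} (n N : ℕ) (β τ : F) (i : Fin N) (a : Fin m)
    (p q : Fin n × (Fin N → Fin n)) :
    PolyFn (fun u : Fin m → F => Rsite n N β (u a) τ i p q) := by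
  have h1 := PolyFn.const (F := F) (m := m) 1
  have h0 := PolyFn.const (F := F) (m := m) 0
  have ho := PolyFn.om β τ a
  have hb := h1.add ((PolyFn.const β).mul ho)
  simp only [_root_.Rsite, Rmat, Matrix.of_apply]
  refine PolyFn.mul (PolyFn.add ?_ ?_) (PolyFn.const _)
  · split_ifs
    exacts [hb, h1, h0]
  · split_ifs
    exacts [ho, h0]

lemma PolyFn.blockOp [Field F] {m : ℕ} (n N : ℕ) (β : F) (t : Fin N → F) (a : Fin m)
    (r c : Fin n) (s s' : Fin N → Fin n) :
    PolyFn (fun u : Fin m → F => blockOp n N β (u a) t r c s s') := by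
  have h := PolyFn.listProd
    ((List.ofFn fun i : Fin N => fun u : Fin m → F =>
      _root_.Rsite n N β (u a) (t i) i).reverse) (by
      intro A hA i j
      simp only [List.mem_reverse, List.mem_ofFn] at hA
      obtain ⟨k, rfl⟩ := hA
      exact PolyFn.Rsite n N β (t k) k a i j) (r, s) (c, s')
  simpa [_root_.blockOp, Tmono, List.map_reverse, List.map_ofFn, Function.comp_def] using h

/-- The content of a configuration. -/
def wt {n N : ℕ} (s : Fin N → Fin n) : Multiset (Fin n) := ∑ j, {s j}

lemma Rsite_wt [Field F] (n N : ℕ) (β u τ : F) (i : Fin N)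
    (p q : Fin n × (Fin N → Fin n)) (h : Rsite n N β u τ i p q ≠ 0) :
    {p.1} + wt p.2 = {q.1} + wt q.2 := by
  obtain ⟨a, s⟩ := p
  obtain ⟨b, s'⟩ := q
  simp only [Rsite, Rmat, Matrix.of_apply] at h
  have h2 : ∀ j, j ≠ i → s j = s' j := by
    by_contra hc
    rw [if_neg hc] at h
    simp at h
  have h1 := left_ne_zero_of_mul h
  have e : ∑ j ∈ Finset.univ.erase i, ({s j} : Multiset (Fin n)) =
      ∑ j ∈ Finset.univ.erase i, {s' j} :=
    Finset.sum_congr rfl fun j hj => by rw [h2 j (Finset.ne_of_mem_erase hj)]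
  simp only [wt]
  rw [← Finset.add_sum_erase _ _ (Finset.mem_univ i),
    ← Finset.add_sum_erase _ (fun j => ({s' j} : Multiset (Fin n))) (Finset.mem_univ i), e,
    ← add_assoc, ← add_assoc]
  congr 1
  by_cases hA : a = s' i ∧ s i = b
  · rw [hA.1, hA.2, add_comm]
  · by_cases hB : a = b ∧ s i = s' i ∧ s' i < b
    · rw [hB.1, hB.2.1]
    · simp [hA, hB] at h1

lemma listProd_wt [Field F] {I W : Type*} [Fintype I] [DecidableEq I] (w : I → W)
    (l : List (Matrix I I F)) (hl : ∀ A ∈ l, ∀ i j, A i j ≠ 0 → w i = w j) :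
    ∀ i j, l.prod i j ≠ 0 → w i = w j := by
  induction l with
  | nil =>
    intro i j h
    by_cases hij : i = j
    · rw [hij]
    · simp [hij] at h
  | cons A l ih =>
    intro i j h
    rw [List.prod_cons, Matrix.mul_apply] at h
    obtain ⟨k, -, hk⟩ := Finset.exists_ne_zero_of_sum_ne_zero h
    exact (hl A (by simp) i k (left_ne_zero_of_mul hk)).trans
      (ih (fun B hB => hl B (by simp [hB])) k j (right_ne_zero_of_mul hk))

lemma blockOp_wt [Field F] (n N : ℕ) (β u : F) (t : Fin N → F) (r c : Fin n)
    (s s' : Fin N → Fin n) (h : blockOp n N β u t r c s s' ≠ 0) :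
    {r} + wt s = {c} + wt s' := by
  refine listProd_wt (fun p : Fin n × (Fin N → Fin n) => {p.1} + wt p.2) _ ?_ (r, s) (c, s') h
  intro A hA i j
  simp only [List.mem_reverse, List.mem_ofFn] at hA
  obtain ⟨k, rfl⟩ := hA
  exact Rsite_wt n N β u (t k) k i j

lemma string_wt [Field F] (n N : ℕ) (β : F) (t : Fin N → F) (r : Fin n) (k : ℕ)
    (u : Fin k → F) (c : Fin k → Fin n) (s s' : Fin N → Fin n)
    (h : (List.ofFn fun a => blockOp n N β (u a) t r (c a)).prod s s' ≠ 0) :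
    (∑ _a : Fin k, {r}) + wt s = (∑ a : Fin k, {c a}) + wt s' := by
  induction k generalizing s with
  | zero =>
    by_cases hij : s = s'
    · simp [hij]
    · simp [hij] at h
  | succ k ih =>
    rw [List.ofFn_succ, List.prod_cons, Matrix.mul_apply] at h
    obtain ⟨x, -, hx⟩ := Finset.exists_ne_zero_of_sum_ne_zero h
    have h1 := blockOp_wt _ _ _ _ _ _ _ _ _ (left_ne_zero_of_mul hx)
    have h2 := ih (fun a => u a.succ) (fun a => c a.succ) x (right_ne_zero_of_mul hx)
    rw [Fin.sum_univ_succ, Fin.sum_univ_succ, add_assoc {c 0}, ← h2, add_left_comm, ← h1,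
      add_left_comm, add_assoc]

/-- **Expansion in permutation basis vectors** (Lemma `l0`), for `n = N = M+2`:
for any permutation `π` of `{1,…,N-1}`, the vector
`B_{π(1)}(u_1) ⋯ B_{π(N-1)}(u_{N-1}) |Ω⟩` equals `∑_{w ∈ S_N} C^π_w(u) |w⟩`
with coefficients `C^π_w` depending polynomially on `u_1,…,u_{N-1}`. -/
theorem B_string_span [Field F] [CharZero F] (M : ℕ) (β : F) (t : Fin (M + 2) → F)
    (π : Equiv.Perm (Fin (M + 1)))
    (hind : AlgebraicIndependent ℚ (Sum.elim (fun _ : Unit => β) t)) :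
    ∃ C : Equiv.Perm (Fin (M + 2)) → MvPolynomial (Fin (M + 1)) F,
      ∀ u : Fin (M + 1) → F,
        Matrix.mulVec
            ((List.ofFn fun a : Fin (M + 1) =>
                blockOp (M + 2) (M + 2) β (u a) t 0 ((π a).succ)).prod)
            (ket (M + 2) (M + 2) fun _ => 0) =
          ∑ w : Equiv.Perm (Fin (M + 2)),
            MvPolynomial.eval u (C w) • ket (M + 2) (M + 2) fun j => w j := by
  have key : ∀ s : Fin (M + 2) → Fin (M + 2), PolyFn (fun u : Fin (M + 1) → F =>
      (List.ofFn fun a : Fin (M + 1) =>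
        blockOp (M + 2) (M + 2) β (u a) t 0 ((π a).succ)).prod s (fun _ => 0)) := by
    intro s
    have h := PolyFn.listProd
      (List.ofFn fun a : Fin (M + 1) => fun u : Fin (M + 1) → F =>
        blockOp (M + 2) (M + 2) β (u a) t 0 ((π a).succ)) (by
        intro A hA i j
        simp only [List.mem_ofFn] at hA
        obtain ⟨k, rfl⟩ := hA
        exact PolyFn.blockOp _ _ β t k _ _ i j) s (fun _ => 0)
    simpa [List.map_ofFn, Function.comp_def] using h
  choose P hP using key
  refine ⟨fun w => P fun j => w j, fun u => ?_⟩
  funext s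
  have hL : Matrix.mulVec
            ((List.ofFn fun a : Fin (M + 1) =>
                blockOp (M + 2) (M + 2) β (u a) t 0 ((π a).succ)).prod)
            (ket (M + 2) (M + 2) fun _ => 0) s = MvPolynomial.eval u (P s) := by
    rw [← hP s u]
    simp [Matrix.mulVec, dotProduct, ket]
  rw [hL, Finset.sum_apply]
  simp only [Pi.smul_apply, ket, smul_eq_mul, mul_ite, mul_one, mul_zero]
  by_cases hs : Function.Injective s
  · have hb : Function.Bijective s := Finite.injective_iff_bijective.mp hs
    rw [Finset.sum_eq_single (Equiv.ofBijective s hb)]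
    · simp
    · intro w _ hw
      rw [if_neg]
      rintro rfl
      exact hw (by ext; simp)
    · simp
  · rw [Finset.sum_eq_zero]
    · by_contra hne
      rw [← hP s u] at hne
      have h := string_wt _ _ _ _ _ _ u (fun a => (π a).succ) _ _ hne
      apply hs
      have e1 : ∑ a, ({(π a).succ} : Multiset (Fin (M + 2))) = ∑ a : Fin (M + 1), {a.succ} :=
        Equiv.sum_comp π (fun a => ({a.succ} : Multiset (Fin (M + 2))))
      have e2 : wt (fun _ : Fin (M + 2) => (0 : Fin (M + 2))) =
          {0} + ∑ _a : Fin (M + 1), {0} := by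
        rw [wt, Fin.sum_univ_succ]
      rw [e1, e2, add_comm _ (wt s), ← add_assoc (∑ a : Fin (M + 1), ({a.succ} : Multiset (Fin (M + 2))))] at h
      have h3 := add_right_cancel h
      rw [add_comm _ {0}, ← Fin.sum_univ_succ (fun a : Fin (M + 2) => ({a} : Multiset (Fin (M + 2))))]
        at h3
      have e4 : ∀ f : Fin (M + 2) → Fin (M + 2),
          ∑ a, ({f a} : Multiset (Fin (M + 2))) = Finset.univ.val.map f := by
        intro f
        have h6 := Multiset.sum_map_singleton (Finset.univ.val.map f)
        rw [Multiset.map_map] at h6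
        exact h6
      rw [wt, e4, e4 (fun a => a), Multiset.map_id'] at h3
      have h5 : (Multiset.map s Finset.univ.val).Nodup := by
        rw [h3]
        exact Finset.univ.nodup
      intro a b hab
      exact Multiset.inj_on_of_nodup_map h5 a (by simp) b (by simp) hab
    · intro w _
      rw [if_neg]
      rintro rfl
      exact hs w.injective
end
end

section
/- Let 1 ≤ k ≤ n−1 and let (n_1,…,n_{N−1}) satisfy: (i) 0 ≤ n_i < k for all i, and (ii) n_{l+1} ≥ n_{l+2} ≥ ⋯ ≥ n_{N−1} for some l ≥ 0. Then for any permutation π of {1,…,l}, the right action of B_k(u) satisfies ⟨n_{π(1)}, n_{π(2)}, …, n_{π(l)}, k, n_{l+1}, …, n_{N−1}| B_k(u) = (∏_{i=1}^{l} (u ⊖ t_i)) ⟨n_{π(1)}, …, n_{π(l)}, n_{l+1}, …, n_{N−1}, 0|. -/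
noncomputable section
open scoped BigOperators

variable {F : Type*}

/-- The bra `⟨n_{π(1)},…,n_{π(l)}, k, n_{l+1},…,n_{N-1}|` (as a function recording
the entries at the `N = L+1` sites, `0`-based positions). -/
def braIn (L l m : ℕ) (hl : l ≤ L) (nseq : Fin L → Fin (m + 2))
    (π : Equiv.Perm (Fin L)) (kk : Fin (m + 2)) : Fin (L + 1) → Fin (m + 2) :=
  fun j =>
    if h : (j : ℕ) < l then nseq (π ⟨j, lt_of_lt_of_le h hl⟩)
    else if h2 : (j : ℕ) = l then kk
    else nseq ⟨(j : ℕ) - 1, by have := j.isLt; omega⟩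

/-- The bra `⟨n_{π(1)},…,n_{π(l)}, n_{l+1},…,n_{N-1}, 0|`. -/
def braOut (L l m : ℕ) (hl : l ≤ L) (nseq : Fin L → Fin (m + 2))
    (π : Equiv.Perm (Fin L)) : Fin (L + 1) → Fin (m + 2) :=
  fun j =>
    if h : (j : ℕ) < l then nseq (π ⟨j, lt_of_lt_of_le h hl⟩)
    else if h2 : (j : ℕ) < L then nseq ⟨j, h2⟩
    else 0


/-- Invariant principle for the descending product of a list of matrices. -/
theorem inv_prod [Field F] {ι : Type*} [Fintype ι] [DecidableEq ι] (N : ℕ)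
    (f : Fin N → Matrix ι ι F) (Inv : ℕ → (ι → F) → Prop) (v : ι → F)
    (h0 : Inv N v)
    (hs : ∀ (i : Fin N) (w : ι → F), Inv (i + 1) w → Inv i (Matrix.vecMul w (f i))) :
    Inv 0 (Matrix.vecMul v ((List.ofFn f).reverse).prod) := by
  induction N generalizing Inv with
  | zero => simpa using h0
  | succ N ih =>
    have h := ih (fun i => f i.succ) (fun p => Inv (p + 1)) h0
      (fun i w hw => by simpa using hs i.succ w (by simpa using hw))
    have h2 := hs 0 _ (by simpa using h)
    simpa [List.ofFn_succ, Matrix.vecMul_vecMul] using h2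

/-- The auxiliary value after processing sites `p, …, N-1` in the freezing regime. -/
def auxv (n N : ℕ) (z : Fin n) (s : Fin N → Fin n) (p : ℕ) : Fin n :=
  if h : p < N then s ⟨p, h⟩ else z

/-- The state after processing sites `p, …, N-1` in the freezing regime. -/
def stv (n N : ℕ) (s s' : Fin N → Fin n) (p : ℕ) : Fin N → Fin n :=
  fun j => if (j : ℕ) < p then s j else s' j

/-- First form of the invariant. -/
def formA [Field F] (n N : ℕ) (z : Fin n) (s s' : Fin N → Fin n) (p : ℕ)
    (w : Fin n × (Fin N → Fin n) → F) : Prop :=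
  w = Pi.single (auxv n N z s p, stv n N s s' p) 1

/-- Second form of the invariant. -/
def formB [Field F] (n N l : ℕ) (c : Fin N → F) (k : Fin n) (s s' : Fin N → Fin n) (p : ℕ)
    (w : Fin n × (Fin N → Fin n) → F) : Prop :=
  (∀ x, w (k, x) =
    (∏ i ∈ Finset.univ.filter (fun i : Fin N => p ≤ (i : ℕ) ∧ (i : ℕ) < l), c i) *
      (if x = s' then 1 else 0)) ∧
  ∀ a x, w (a, x) ≠ 0 → ∀ j : Fin N, (j : ℕ) < p → x j = s j

theorem formA_step [Field F] (n N : ℕ) (β u : F) (τ : F) (z : Fin n)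
    (s s' : Fin N → Fin n) (i : Fin N)
    (h1 : s' i = auxv n N z s (i + 1)) (h2 : auxv n N z s (i + 1) ≤ s i)
    (w : Fin n × (Fin N → Fin n) → F) (hw : formA n N z s s' (i + 1) w) :
    formA n N z s s' i (Matrix.vecMul w (Rsite n N β u τ i)) := by
  unfold formA at *
  rw [hw, Matrix.single_one_vecMul]
  have ha : auxv n N z s i = s i := by simp [auxv]
  have hs : stv n N s s' (i + 1) i = s i := by simp [stv]
  have hs' : stv n N s s' i i = auxv n N z s (i + 1) := by simp [stv, h1]
  have ho : ∀ j, j ≠ i → stv n N s s' (i + 1) j = stv n N s s' i j := by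
    intro j hj
    have : (j : ℕ) ≠ i := fun h => hj (Fin.ext h)
    unfold stv
    have : (j : ℕ) < i + 1 ↔ (j : ℕ) < i := by omega
    simp [this]
  rw [ha]
  ext ⟨b, x⟩
  simp only [Matrix.row, Rsite, Rmat, Matrix.of_apply, hs, Pi.single_apply, Prod.mk.injEq]
  by_cases hx : ∀ j, j ≠ i → stv n N s s' (i + 1) j = x j
  · have hxe : x = stv n N s s' i ↔ x i = auxv n N z s (i + 1) := by
      constructor
      · rintro rfl; exact hs'
      · intro h
        ext1 j
        by_cases hj : j = i
        · subst hj; rw [h, hs']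
        · rw [← hx j hj, ho j hj]
    simp only [hxe]
    simp only [if_pos hx, mul_one]
    generalize auxv n N z s (i + 1) = a at *
    have e2 : ¬ (a = b ∧ s i = x i ∧ x i < b) := by
      rintro ⟨rfl, h, h'⟩
      rw [← h] at h'
      exact absurd h2 (not_le.mpr h')
    rw [if_neg e2, add_zero]
    by_cases e : a = x i ∧ s i = b
    · have e3 : ¬ (b < x i) := by rw [← e.1, ← e.2]; exact not_lt.mpr h2
      have e4 : b = s i ∧ x i = a := ⟨e.2.symm, e.1.symm⟩
      rw [if_pos e, if_neg e3, if_pos e4]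
    · rw [if_neg e, if_neg]
      rintro ⟨h, h'⟩; exact e ⟨h'.symm, h.symm⟩
  · rw [if_neg hx, mul_zero, if_neg]
    rintro ⟨-, rfl⟩
    exact hx ho

theorem formA_formB [Field F] (n N l : ℕ) (c : Fin N → F) (z k : Fin n)
    (s s' : Fin N → Fin n) (hsame : ∀ i : Fin N, (i : ℕ) < l → s i = s' i)
    (hk : auxv n N z s l = k)
    (w : Fin n × (Fin N → Fin n) → F) (hw : formA n N z s s' l w) :
    formB n N l c k s s' l w := by
  unfold formA at hw
  have hst : stv n N s s' l = s' := by
    ext1 j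
    unfold stv
    split_ifs with h
    · exact hsame j h
    · rfl
  rw [hk, hst] at hw
  subst hw
  constructor
  · intro x
    rw [Finset.filter_eq_empty_iff.mpr (by intro i _; omega)]
    simp [Pi.single_apply]
  · intro a x h j hj
    simp only [Pi.single_apply, Prod.mk.injEq] at h
    by_cases hx : a = k ∧ x = s'
    · rw [hx.2, hsame j hj]
    · simp [hx] at h

theorem formB_step [Field F] (n N l : ℕ) (β u : F) (t : Fin N → F) (k : Fin n)
    (s s' : Fin N → Fin n) (i : Fin N) (hil : (i : ℕ) < l)
    (hsame : s i = s' i) (hlt : s i < k)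
    (w : Fin n × (Fin N → Fin n) → F)
    (hw : formB n N l (fun i => om β u (t i)) k s s' (i + 1) w) :
    formB n N l (fun i => om β u (t i)) k s s' i
      (Matrix.vecMul w (Rsite n N β u (t i) i)) := by
  obtain ⟨hA, hB⟩ := hw
  constructor
  · intro x
    have hset : Finset.univ.filter (fun j : Fin N => (i : ℕ) ≤ (j : ℕ) ∧ (j : ℕ) < l) =
        insert i (Finset.univ.filter (fun j : Fin N => (i : ℕ) + 1 ≤ (j : ℕ) ∧ (j : ℕ) < l)) := by
      ext j
      simp only [Finset.mem_filter, Finset.mem_univ, true_and, Finset.mem_insert, Fin.ext_iff]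
      omega
    rw [hset, Finset.prod_insert (by simp), mul_assoc, ← hA x]
    simp only [Matrix.vecMul, dotProduct]
    rw [Finset.sum_eq_single (k, x)]
    · by_cases hx : x = s'
      · subst hx
        rw [hsame] at hlt
        simp [Rsite, Rmat, hlt, hlt.ne, hlt.ne', mul_comm]
      · rw [hA x]; simp [hx]
    · rintro ⟨a, y⟩ - hne
      by_cases h0 : w (a, y) = 0
      · rw [h0, zero_mul]
      have hy : y i = s i := hB a y h0 i (by omega)
      simp only [Rsite, Rmat, Matrix.of_apply, hy, hlt.ne, and_false, if_false, zero_add]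
      by_cases hx : ∀ j, j ≠ i → y j = x j
      · rw [if_neg, zero_mul, mul_zero]
        rintro ⟨rfl, h, -⟩
        apply hne
        have : y = x := by
          ext1 j
          by_cases hj : j = i
          · subst hj; rw [hy, h]
          · exact hx j hj
        rw [this]
      · simp [hx]
    · simp
  · intro a x h j hj
    simp only [Matrix.vecMul, dotProduct] at h
    obtain ⟨⟨b, y⟩, -, hne⟩ := Finset.exists_ne_zero_of_sum_ne_zero h
    have h1 := hB b y (left_ne_zero_of_mul hne) j (by omega)
    have h2 := right_ne_zero_of_mul hne
    simp only [Rsite, Matrix.of_apply] at h2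
    have h3 := right_ne_zero_of_mul h2
    by_cases hx : ∀ j, j ≠ i → y j = x j
    · rw [← hx j (by rintro rfl; omega), h1]
    · simp [hx] at h3

theorem main_aux [Field F] (n N l : ℕ) (hl : l ≤ N) (β u : F) (t : Fin N → F) (z k : Fin n)
    (s s' : Fin N → Fin n)
    (hsame : ∀ i : Fin N, (i : ℕ) < l → s i = s' i)
    (hlt : ∀ i : Fin N, (i : ℕ) < l → s i < k)
    (hk : auxv n N z s l = k)
    (h1 : ∀ i : Fin N, l ≤ (i : ℕ) → s' i = auxv n N z s (i + 1))
    (h2 : ∀ i : Fin N, l ≤ (i : ℕ) → auxv n N z s (i + 1) ≤ s i) :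
    Matrix.vecMul (ket n N s) (blockOp n N β u t z k) =
      (∏ i ∈ Finset.univ.filter (fun i : Fin N => (i : ℕ) < l), om β u (t i)) •
        ket n N s' := by
  have key := inv_prod N (fun i : Fin N => Rsite n N β u (t i) i)
    (fun p w => (l ≤ p → formA n N z s s' p w) ∧
      (p ≤ l → formB n N l (fun i => om β u (t i)) k s s' p w))
    (Pi.single (z, s) 1)
    (by
      have hA : formA n N z s s' N (Pi.single (z, s) (1 : F)) := by
        have : stv n N s s' N = s := by ext1 j; simp [stv]
        simp [formA, auxv, this]
      refine ⟨fun _ => hA, fun h => ?_⟩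
      obtain rfl : l = N := le_antisymm hl h
      exact formA_formB n l l _ z k s s' hsame hk _ hA)
    (by
      rintro i w ⟨hA, hB⟩
      have hA' : l ≤ (i : ℕ) → formA n N z s s' i (Matrix.vecMul w (Rsite n N β u (t i) i)) :=
        fun h => formA_step n N β u (t i) z s s' i (h1 i h) (h2 i h) w (hA (by omega))
      refine ⟨hA', fun h => ?_⟩
      rcases h.lt_or_eq with h | h
      · exact formB_step n N l β u t k s s' i h (hsame i h) (hlt i h) w (hB h)
      · have hA'' := hA' h.ge
        rw [h] at hA'' ⊢
        exact formA_formB n N l _ z k s s' hsame hk _ hA'')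
  have hf := (key.2 (Nat.zero_le l)).1
  have hket : ket (F := F) n N s = Pi.single s 1 := by
    ext x; simp [ket, Pi.single_apply]
  rw [hket, Matrix.single_one_vecMul]
  ext x
  have := hf x
  rw [Matrix.single_one_vecMul] at this
  simpa [blockOp, Tmono, ket, Matrix.row] using this

/-- **Right action of `B_k(u)`** (Lemma `lemma1`), for `n = m+2`, `N = L+1`:
if `0 ≤ n_i < k` for all `i`, and `n_{l+1} ≥ n_{l+2} ≥ ⋯ ≥ n_{N-1}`, then for any
permutation `π` of `{1,…,l}`,
`⟨n_{π(1)},…,n_{π(l)}, k, n_{l+1},…,n_{N-1}| B_k(u)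
  = (∏_{i=1}^{l} (u ⊖ t_i)) ⟨n_{π(1)},…,n_{π(l)}, n_{l+1},…,n_{N-1}, 0|`. -/
theorem B_right_action [Field F] [CharZero F] (L l m : ℕ) (hl : l ≤ L) (β u : F)
    (t : Fin (L + 1) → F)
    (hind : AlgebraicIndependent ℚ (Sum.elim ![β, u] t))
    (kk : Fin (m + 1)) (nseq : Fin L → Fin (m + 2))
    (hk : ∀ i, (nseq i : ℕ) < (kk.succ : ℕ))
    (hmono : ∀ i j : Fin L, l ≤ (i : ℕ) → (i : ℕ) ≤ (j : ℕ) → nseq j ≤ nseq i)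
    (π : Equiv.Perm (Fin L)) (hπ : ∀ j : Fin L, l ≤ (j : ℕ) → π j = j) :
    Matrix.vecMul (ket (m + 2) (L + 1) (braIn L l m hl nseq π kk.succ))
        (blockOp (m + 2) (L + 1) β u t 0 kk.succ) =
      (∏ i ∈ Finset.univ.filter (fun i : Fin (L + 1) => (i : ℕ) < l), om β u (t i)) •
        ket (m + 2) (L + 1) (braOut L l m hl nseq π) := by
  have haux : ∀ p, auxv (m + 2) (L + 1) 0 (braIn L l m hl nseq π kk.succ) (p + 1) =
      if h : l ≤ p ∧ p < L then nseq ⟨p, h.2⟩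
      else auxv (m + 2) (L + 1) 0 (braIn L l m hl nseq π kk.succ) (p + 1) := by
    intro p
    split_ifs with h
    · have e1 : p + 1 < L + 1 := by omega
      have e2 : ¬ (p + 1 < l) := by omega
      have e3 : ¬ (p + 1 = l) := by omega
      simp [auxv, braIn, e2, e3, h.2]
    · rfl
  apply main_aux (m + 2) (L + 1) l (by omega)
  · intro i hi
    simp [braIn, braOut, hi]
  · intro i hi
    have := hk (π ⟨i, lt_of_lt_of_le hi hl⟩)
    simp only [braIn, hi, dif_pos]
    exact this
  · have : l < L + 1 := by omega
    simp [auxv, braIn, this]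
  · intro i hi
    have hn : ¬ ((i : ℕ) < l) := by omega
    by_cases hL : (i : ℕ) < L
    · rw [haux, dif_pos ⟨hi, hL⟩]
      simp [braOut, hn, hL]
    · simp [braOut, hn, hL, auxv]
  · intro i hi
    have hn : ¬ ((i : ℕ) < l) := by omega
    by_cases hL : (i : ℕ) < L
    · rw [haux, dif_pos ⟨hi, hL⟩]
      by_cases he : (i : ℕ) = l
      · simp only [braIn, hn, he, dif_pos, dif_neg, lt_irrefl, not_false_eq_true]
        exact le_of_lt (hk _)
      · simp only [braIn, hn, he, dif_neg, not_false_eq_true]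
        exact hmono _ _ (by simp only; omega) (by simp only; omega)
    · simp [hL, auxv]
end
end
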